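/- There are exactly two pairs (X₁, X₂) of positive real numbers satisfying the Einstein system with parameters γ₁ = 5/9, γ₂ = 1/9, b₁ = 1/36, b₂ = 2/9, r = 1/2. (This is the algebraic content of the theorem: the bisymmetric fibration of Type II corresponding to the triple (𝔢₇, 𝔰𝔬₁₂ ⊕ 𝔰𝔲₂, 𝔰𝔬₄ ⊕ 𝔰𝔬₈ ⊕ ℝ) admits, up to homothety, exactly two Einstein adapted metrics.) -/

import Mathlib

/-- The Einstein system (E1)–(E2) for a Type II bisymmetric fibration,
in unknowns `X₁ X₂` with parameters `γ₁ γ₂ b₁ b₂ r`. -/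
def EinsteinSystem (γ₁ γ₂ b₁ b₂ r X₁ X₂ : ℝ) : Prop :=
  2*γ₁*X₁^2*X₂ + (1-γ₁)*X₂ - 2*γ₂*X₁*X₂^2 - (1-γ₂)*X₁ = 0 ∧
  2*b₁*X₂ + 2*b₂*X₁ - 4*r*X₁*X₂ + 2*γ₁*X₁^2*X₂ + (1-γ₁)*X₂ = 0

/-- The quartic obtained from the Einstein system by eliminating `X₂`. -/
def einsteinQuartic (x : ℝ) : ℝ := 200*x^4 - 600*x^3 + 614*x^2 - 264*x + 39

/-- Positive solutions of the system correspond to roots of the quartic in `(3/10, 3/2)`, the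
interval where `20 X₁² - 36 X₁ + 9 = (10 X₁ - 3) (2 X₁ - 3)` is negative. -/
lemma pos_einsteinSystem_iff (x y : ℝ) :
    (0 < x ∧ 0 < y ∧ EinsteinSystem (5/9) (1/9) (1/36) (2/9) (1/2) x y) ↔
      (3/10 < x ∧ x < 3/2 ∧ einsteinQuartic x = 0) ∧ y = -8*x / (20*x^2 - 36*x + 9) := by
  unfold EinsteinSystem einsteinQuartic
  constructor
  · rintro ⟨hx, hy, h1, h2⟩
    have hyq : y * (20*x^2 - 36*x + 9) = -8*x := by linarith
    have hq : 20*x^2 - 36*x + 9 < 0 := by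
      by_contra! h
      nlinarith [mul_nonneg hy.le h]
    refine ⟨⟨by nlinarith, by nlinarith, ?_⟩, by rw [eq_div_iff hq.ne, hyq]⟩
    have h3 : 12*x * (200*x^4 - 600*x^3 + 614*x^2 - 264*x + 39) = 0 := by
      linear_combination (-9/2) * (20*x^2 - 36*x + 9)^2 * h1
        + (5*x^2 + 2) * (20*x^2 - 36*x + 9) * hyq
        - x * (y * (20*x^2 - 36*x + 9) - 8*x) * hyq
    exact (mul_eq_zero.1 h3).resolve_left (by positivity)
  · rintro ⟨⟨hl, hu, hf⟩, hy⟩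
    have hq : 20*x^2 - 36*x + 9 < 0 := by nlinarith
    have hx : 0 < x := by linarith
    have hyq : y * (20*x^2 - 36*x + 9) = -8*x := (eq_div_iff hq.ne).1 hy
    refine ⟨hx, hy ▸ div_pos_of_neg_of_neg (by linarith) hq, ?_, by linear_combination hyq / 18⟩
    refine (mul_eq_zero.1 ?_).resolve_left (pow_ne_zero 2 hq.ne)
    linear_combination (-8/3 * x) * hf
      + 2/9 * (5*x^2 + 2) * (20*x^2 - 36*x + 9) * hyq
      - 2/9 * x * (y * (20*x^2 - 36*x + 9) - 8*x) * hyq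

lemma einsteinQuartic_neg {x : ℝ} (hl : 2/5 ≤ x) (hu : x ≤ 13/10) : einsteinQuartic x < 0 := by
  unfold einsteinQuartic
  nlinarith [mul_nonneg (sub_nonneg.2 hl) (sub_nonneg.2 hu),
    mul_nonneg (mul_nonneg (sub_nonneg.2 hl) (sub_nonneg.2 hu)) (sq_nonneg (x - 3/4))]

lemma continuous_einsteinQuartic : Continuous einsteinQuartic := by
  unfold einsteinQuartic
  fun_prop

lemma hasDerivAt_einsteinQuartic (x : ℝ) :
    HasDerivAt einsteinQuartic (800*x^3 - 1800*x^2 + 1228*x - 264) x := by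
  have := (((((hasDerivAt_id x).pow 4).const_mul 200).sub
    (((hasDerivAt_id x).pow 3).const_mul 600)).add
    (((hasDerivAt_id x).pow 2).const_mul 614)).sub ((hasDerivAt_id x).const_mul 264)
    |>.add_const 39
  refine this.congr_deriv ?_
  simp
  ring

lemma strictAntiOn_einsteinQuartic : StrictAntiOn einsteinQuartic (Set.Icc (3/10) (2/5)) := by
  refine strictAntiOn_of_deriv_neg (convex_Icc _ _) continuous_einsteinQuartic.continuousOn ?_
  intro x hx
  rw [interior_Icc] at hx
  rw [(hasDerivAt_einsteinQuartic x).deriv]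
  have h1 : 0 < x - 3/10 := sub_pos.2 hx.1
  have h2 : 0 < 2/5 - x := sub_pos.2 hx.2
  nlinarith [mul_pos h1 h2, mul_pos (mul_pos h1 h2) h2]

lemma strictMonoOn_einsteinQuartic :
    StrictMonoOn einsteinQuartic (Set.Icc (13/10) (3/2)) := by
  refine strictMonoOn_of_deriv_pos (convex_Icc _ _) continuous_einsteinQuartic.continuousOn ?_
  intro x hx
  rw [interior_Icc] at hx
  rw [(hasDerivAt_einsteinQuartic x).deriv]
  have h1 : 0 < x - 13/10 := sub_pos.2 hx.1
  nlinarith [mul_pos h1 h1, mul_pos (mul_pos h1 h1) h1]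

/-- The quartic has exactly two roots in `(3/10, 3/2)`. -/
lemma exists_einsteinQuartic_roots :
    ∃ a b : ℝ, a ≠ b ∧
      ∀ x, (3/10 < x ∧ x < 3/2 ∧ einsteinQuartic x = 0) ↔ x = a ∨ x = b := by
  obtain ⟨a, ha, ha0⟩ := intermediate_value_Ioo' (by norm_num : (3/10 : ℝ) ≤ 2/5)
    continuous_einsteinQuartic.continuousOn
    (show (0 : ℝ) ∈ Set.Ioo _ _ by constructor <;> norm_num [einsteinQuartic])
  obtain ⟨b, hb, hb0⟩ := intermediate_value_Ioo (by norm_num : (13/10 : ℝ) ≤ 3/2)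
    continuous_einsteinQuartic.continuousOn
    (show (0 : ℝ) ∈ Set.Ioo _ _ by constructor <;> norm_num [einsteinQuartic])
  refine ⟨a, b, (show a < b by linarith [ha.2, hb.1]).ne, fun x => ⟨?_, ?_⟩⟩
  · rintro ⟨hl, hu, h0⟩
    rcases le_or_gt x (2/5) with h | h
    · exact .inl (strictAntiOn_einsteinQuartic.injOn ⟨hl.le, h⟩ (Set.Ioo_subset_Icc_self ha)
        (h0.trans ha0.symm))
    rcases le_or_gt x (13/10) with h' | h'
    · exact absurd h0 (einsteinQuartic_neg h.le h').ne
    · exact .inr (strictMonoOn_einsteinQuartic.injOn ⟨h'.le, hu.le⟩ (Set.Ioo_subset_Icc_self hb)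
        (h0.trans hb0.symm))
  · rintro (rfl | rfl)
    · exact ⟨ha.1, by linarith [ha.2], ha0⟩
    · exact ⟨by linarith [hb.1], hb.2, hb0⟩

/- STATEMENT 6: exactly two positive solutions for (𝔢₇, 𝔰𝔬₁₂⊕𝔰𝔲₂, 𝔰𝔬₄⊕𝔰𝔬₈⊕ℝ). -/
theorem e7_p4_exactly_two_einstein_adapted_metrics :
    {P : ℝ × ℝ | 0 < P.1 ∧ 0 < P.2 ∧
      EinsteinSystem (5/9) (1/9) (1/36) (2/9) (1/2) P.1 P.2}.ncard = 2 := by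
  obtain ⟨a, b, hab, hroots⟩ := exists_einsteinQuartic_roots
  rw [Set.ncard_eq_two]
  refine ⟨(a, -8*a / (20*a^2 - 36*a + 9)), (b, -8*b / (20*b^2 - 36*b + 9)),
    fun h => hab (congrArg Prod.fst h), ?_⟩
  ext ⟨x, y⟩
  simp only [Set.mem_ofPred_eq, pos_einsteinSystem_iff, hroots, Set.mem_insert_iff,
    Set.mem_singleton_iff, Prod.mk.injEq]
  constructor
  · rintro ⟨rfl | rfl, rfl⟩ <;> simp
  · rintro (⟨rfl, rfl⟩ | ⟨rfl, rfl⟩) <;> simp
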